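/- For 2 ≤ m ≤ n, the restriction to H_{m-1,n} of every finite-dimensional complex irreducible representation of H_{m,n} is multiplicity free. In particular, the restriction to H_{n-1,n} of every finite-dimensional complex irreducible representation of the wreath product G≀S_n is multiplicity free. -/

import Mathlib

/-!
By the Gelfand criterion it suffices that the centralizer of `H_{m-1,n}` in `ℂ[H_{m,n}]` is
commutative (`isMultiplicityFree_of_commute`): by Jacobson density and averaging, every
`ℂ[H]`-endomorphism of a simple `ℂ[K]`-module is the action of an element of the centralizer of `H`
(`exists_centralizer_smul`), and a semisimple module with commutative endomorphism ring is
multiplicity free.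

A subalgebra fixed pointwise by an anti-automorphism `Θ` is commutative. Inversion on `G ≀ Sₙ` is not
a suitable `Θ` in general, as it fixes the center of `ℂ[G]` only if every element of `G` is conjugate
to its inverse. Instead, let `θ` be transposition in each matrix block of `ℂ[G]`
(`exists_antiInvolution`), which fixes the center of `ℂ[G]` pointwise, and let `Θ` act on
`ℂ[G ≀ Sₙ] = ℂ[G]^{⊗ n} ⋊ Sₙ` by `θ` on each tensor factor and by inversion on `Sₙ` (`theta`).

Write the subgroups as `H_{m,n} ≤ H_{m+1,n}`, with points numbered from `0`. For `x ∈ H_{m+1,n}`, the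
elements `x` and `Θ x` agree modulo the commutators `[ℂ[H_{m,n}], ℂ[G ≀ Sₙ]]` (`diff_of`). Indeed, let
`π` be the permutation part of `x` and choose one point on each cycle of `π`, where `m` is chosen on
its own cycle.
* Conjugation by `Gⁿ ≤ H_{m,n}` concentrates the `G`-coordinates of `x` at the chosen points
  (`exists_twisted_conj`).
* Conjugation by tuples that are constant on the cycles of `π` allows each of these coordinates to
  be averaged to a central element of `ℂ[G]`, which `θ` fixes (`diff_tens`).
* Reflecting each cycle of `π` at its chosen point conjugates `π⁻¹` to `π`
  (`exists_rep_and_reversal`). The reflection fixes `m` and all later points, so it lies in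
  `H_{m,n}` (`diff_tens_central`).

Averaging over conjugation by `H_{m,n}` kills these commutators and is the identity on the
centralizer of `H_{m,n}`, which `Θ` preserves. So `Θ` is the identity on the centralizer of `H_{m,n}` in
`ℂ[H_{m+1,n}]` (`theta_eq_self`).
-/

/-- The action of `Equiv.Perm (Fin n)` on `Fin n → G` by permuting coordinates. -/
def wreathHom (G : Type*) [Group G] (n : ℕ) : Equiv.Perm (Fin n) →* MulAut (Fin n → G) where
  toFun π := MulEquiv.arrowCongr π (MulEquiv.refl G)
  map_one' := by ext f i; rfl
  map_mul' := by intro π σ; ext f i; rfl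

/-- The wreath product `G ≀ Sₙ`. -/
abbrev WreathProduct (G : Type*) [Group G] (n : ℕ) :=
  SemidirectProduct (Fin n → G) (Equiv.Perm (Fin n)) (wreathHom G n)

/-- The subgroup `H_{m,n}` of `G ≀ Sₙ` consisting of elements whose permutation part fixes all
1-based points `j` with `m+1 ≤ j ≤ n`, i.e. all 0-based points `j` with `m ≤ j`. -/
noncomputable def Hmn (G : Type*) [Group G] (n m : ℕ) : Subgroup (WreathProduct G n) :=
  Subgroup.comap SemidirectProduct.rightHom
    (⨅ j : {j : Fin n // m ≤ (j : ℕ)}, MulAction.stabilizer (Equiv.Perm (Fin n)) (j : Fin n))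

/-- The group algebra of a subgroup `H ≤ K`, as a subalgebra of `ℂ[K]`. -/
noncomputable def groupSubalgebra (K : Type*) [Group K] (H : Subgroup K) :
    Subalgebra ℂ (MonoidAlgebra ℂ K) :=
  Algebra.adjoin ℂ (Set.range fun h : H => MonoidAlgebra.of ℂ K (h : K))

/-- A module is multiplicity free if any two isomorphic simple submodules coincide; for
semisimple modules this says that each isomorphism class of irreducible module occurs at most
once in a decomposition into irreducibles. -/
def IsMultiplicityFree (R : Type*) [Ring R] (V : Type*) [AddCommGroup V] [Module R V] : Prop :=
  ∀ S T : Submodule R V, IsSimpleModule R S → IsSimpleModule R T →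
    Nonempty (S ≃ₗ[R] T) → S = T

/-! ### Averaging over a subgroup -/

/-- Averaging over conjugation by the subgroup `H`: the projection of `ℂ[K]` onto the centralizer
of `H`. -/
noncomputable def avg {K : Type} [Group K] [Finite K] (H : Subgroup K) :
    MonoidAlgebra ℂ K →ₗ[ℂ] MonoidAlgebra ℂ K :=
  letI := Fintype.ofFinite H
  (Fintype.card H : ℂ)⁻¹ • ∑ h : H, LinearMap.mulRight ℂ (MonoidAlgebra.of ℂ K (h : K)⁻¹) ∘ₗ
    LinearMap.mulLeft ℂ (MonoidAlgebra.of ℂ K (h : K))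

section avg

variable {K : Type} [Group K] [Finite K] (H : Subgroup K)

theorem avg_apply [Fintype H] (y : MonoidAlgebra ℂ K) :
    avg H y = (Fintype.card H : ℂ)⁻¹ • ∑ h : H,
      MonoidAlgebra.of ℂ K h * y * MonoidAlgebra.of ℂ K (h : K)⁻¹ := by
  obtain rfl : ‹Fintype H› = Fintype.ofFinite H := Subsingleton.elim _ _
  simp only [avg, LinearMap.smul_apply, LinearMap.sum_apply, LinearMap.comp_apply,
    LinearMap.mulRight_apply, LinearMap.mulLeft_apply]

theorem commute_avg {h : K} (hh : h ∈ H) (y : MonoidAlgebra ℂ K) :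
    Commute (MonoidAlgebra.of ℂ K h) (avg H y) := by
  have := Fintype.ofFinite H
  rw [avg_apply, commute_iff_eq, mul_smul_comm, smul_mul_assoc, Finset.mul_sum, Finset.sum_mul]
  congr 1
  refine Fintype.sum_equiv (Equiv.mulLeft (⟨h, hh⟩ : H)) _ _ fun k => ?_
  simp only [Equiv.coe_mulLeft, Subgroup.coe_mul, mul_inv_rev, map_mul, mul_assoc]
  rw [← map_mul _ h⁻¹ h, inv_mul_cancel, map_one, mul_one]

/-- A linear map that is invariant under conjugation by `H` factors through `avg H`. -/
theorem map_avg {M : Type} [AddCommGroup M] [Module ℂ M] (l : MonoidAlgebra ℂ K →ₗ[ℂ] M)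
    (y : MonoidAlgebra ℂ K)
    (hl : ∀ h ∈ H, l (MonoidAlgebra.of ℂ K h * y * MonoidAlgebra.of ℂ K h⁻¹) = l y) :
    l (avg H y) = l y := by
  have := Fintype.ofFinite H
  have hl' : ∀ h : H, l (MonoidAlgebra.of ℂ K h * y * MonoidAlgebra.of ℂ K (h : K)⁻¹) = l y :=
    fun h => hl h h.2
  rw [avg_apply, map_smul, map_sum]
  simp only [hl', Finset.sum_const, Finset.card_univ, ← Nat.cast_smul_eq_nsmul ℂ, smul_smul]
  rw [inv_mul_cancel₀ (by simp), one_smul]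

theorem avg_eq_self (y : MonoidAlgebra ℂ K)
    (hy : ∀ h ∈ H, Commute (MonoidAlgebra.of ℂ K h) y) : avg H y = y := by
  refine map_avg H LinearMap.id y fun h hh => ?_
  rw [(hy h hh).eq, mul_assoc, ← map_mul, mul_inv_cancel, map_one, mul_one, LinearMap.id_apply]

theorem avg_of_mul_comm (k : H) (y : MonoidAlgebra ℂ K) :
    avg H (MonoidAlgebra.of ℂ K k * y) = avg H (y * MonoidAlgebra.of ℂ K k) := by
  have := Fintype.ofFinite H
  rw [avg_apply, avg_apply]
  refine congrArg _ ?_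
  rw [← Equiv.sum_comp (Equiv.mulRight k) fun h : H => MonoidAlgebra.of ℂ K (h : K) *
    (y * MonoidAlgebra.of ℂ K (k : K)) * MonoidAlgebra.of ℂ K (h : K)⁻¹]
  refine Finset.sum_congr rfl fun h _ => ?_
  have hk : MonoidAlgebra.of ℂ K (k : K) * MonoidAlgebra.of ℂ K (k : K)⁻¹ = 1 := by
    rw [← map_mul, mul_inv_cancel, map_one]
  rw [Equiv.coe_mulRight, Subgroup.coe_mul, mul_inv_rev, map_mul, map_mul]
  simp only [mul_assoc]
  rw [← mul_assoc (MonoidAlgebra.of ℂ K (k : K)) (MonoidAlgebra.of ℂ K (k : K)⁻¹), hk, one_mul]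

/-- `avg H` vanishes on the commutators `[ℂ[H], ℂ[K]]`. -/
theorem avg_mul_comm {u : MonoidAlgebra ℂ K} (hu : u ∈ groupSubalgebra K H) :
    ∀ y, avg H (u * y) = avg H (y * u) := by
  induction hu using Algebra.adjoin_induction with
  | mem x hx =>
    obtain ⟨k, rfl⟩ := hx
    exact avg_of_mul_comm H k
  | algebraMap z => intro y; rw [Algebra.commutes]
  | add a b _ _ ha hb => intro y; rw [add_mul, mul_add, map_add, map_add, ha, hb]
  | mul a b _ _ ha hb => intro y; rw [mul_assoc, ha, mul_assoc, hb, mul_assoc]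

end avg

/-! ### The Gelfand criterion -/

/-- `ℂ[H] ⊆ ℂ[K]` is a quotient of the abstract group algebra of `H`, so Maschke's theorem applies. -/
theorem groupSubalgebra_isSemisimpleRing (K : Type) [Group K] [Finite K] (H : Subgroup K) :
    IsSemisimpleRing (groupSubalgebra K H) := by
  let F : H →* groupSubalgebra K H :=
    { toFun := fun h => ⟨MonoidAlgebra.of ℂ K (h : K), Algebra.subset_adjoin ⟨h, rfl⟩⟩
      map_one' := by ext1; simp [MonoidAlgebra.one_def]
      map_mul' := by intro a b; ext1; simp }
  let f : MonoidAlgebra ℂ H →ₐ[ℂ] groupSubalgebra K H := MonoidAlgebra.lift ℂ _ _ F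
  have : NeZero (Nat.card H : ℂ) := ⟨Nat.cast_ne_zero.2 Nat.card_pos.ne'⟩
  refine RingHom.isSemisimpleRing_of_surjective (f : MonoidAlgebra ℂ H →+* _) ?_
  have hle : groupSubalgebra K H ≤ ((groupSubalgebra K H).val.comp f).range := by
    refine Algebra.adjoin_le ?_
    rintro _ ⟨h, rfl⟩
    exact ⟨MonoidAlgebra.of ℂ H h, by simp [f, F]⟩
  intro x
  obtain ⟨y, hy⟩ := hle x.2
  exact ⟨y, Subtype.ext hy⟩

/-- Every `ℂ[H]`-linear endomorphism of a simple `ℂ[K]`-module is the action of an element of the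
centralizer of `H` in `ℂ[K]`: density gives some element of `ℂ[K]`, averaging over `H` moves it
into the centralizer. -/
theorem exists_centralizer_smul (K : Type) [Group K] [Finite K] (H : Subgroup K)
    (V : Type) [AddCommGroup V] [Module (MonoidAlgebra ℂ K) V]
    [IsSimpleModule (MonoidAlgebra ℂ K) V] (f : V →ₗ[groupSubalgebra K H] V) :
    ∃ c : MonoidAlgebra ℂ K, (∀ h ∈ H, Commute (MonoidAlgebra.of ℂ K h) c) ∧
      ∀ v, f v = c • v := by
  classical
  let A := MonoidAlgebra ℂ K
  have : Fintype H := Fintype.ofFinite H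
  let _ : Module ℂ V := Module.compHom V (algebraMap ℂ A)
  have : IsScalarTower ℂ A V := ⟨fun z a v => by
    change (z • a) • v = algebraMap ℂ A z • a • v
    rw [← mul_smul, Algebra.smul_def]⟩
  have : Module.Finite A V := inferInstance
  have : Module.Finite ℂ A := inferInstance
  have : Module.Finite ℂ V := Module.Finite.trans A V
  have hfh : ∀ h ∈ H, ∀ v, f (MonoidAlgebra.of ℂ K h • v) = MonoidAlgebra.of ℂ K h • f v := by
    intro h hh v
    exact f.map_smul (⟨MonoidAlgebra.of ℂ K h, Algebra.subset_adjoin ⟨⟨h, hh⟩, rfl⟩⟩ :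
      groupSubalgebra K H) v
  have hfz : ∀ (z : ℂ) v, f (z • v) = z • f v := by
    intro z v
    exact f.map_smul (algebraMap ℂ (groupSubalgebra K H) z) v
  -- By Schur's lemma `End_A(V) = ℂ`, so `f` lies in the double commutant of `A`.
  let g : Module.End (Module.End A V) V :=
    { toFun := f
      map_add' := f.map_add
      map_smul' := by
        intro φ v
        obtain ⟨z, rfl⟩ := (IsSimpleModule.algebraMap_end_bijective_of_isAlgClosed
          (A := A) (V := V) ℂ).2 φ
        exact hfz z v }
  obtain ⟨s, hs⟩ := (Module.Finite.fg_top : (⊤ : Submodule ℂ V).FG)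
  obtain ⟨a, ha⟩ := jacobson_density g s
  have ha' : ∀ v, f v = a • v := by
    intro v
    have hv : v ∈ Submodule.span ℂ (s : Set V) := by rw [hs]; trivial
    induction hv using Submodule.span_induction with
    | mem x hx => exact ha x hx
    | zero => simp
    | add x y _ _ hx hy => rw [map_add, hx, hy, smul_add]
    | smul z x _ hx => rw [hfz, hx, smul_algebra_smul_comm]
  refine ⟨avg H a, fun h hh => commute_avg H hh a, fun v => ?_⟩
  have hh : ∀ h : H, (MonoidAlgebra.of ℂ K h * a * MonoidAlgebra.of ℂ K (h : K)⁻¹) • v = f v := by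
    intro h
    rw [mul_smul, mul_smul, ← ha', hfh _ (H.inv_mem h.2), ← mul_smul, ← map_mul,
      mul_inv_cancel, map_one, one_smul]
  rw [avg_apply, smul_assoc, Finset.sum_smul]
  simp only [hh, Finset.sum_const, Finset.card_univ, ← Nat.cast_smul_eq_nsmul ℂ, smul_smul]
  rw [inv_mul_cancel₀ (by simp), one_smul]

/-- **Gelfand criterion.** If the centralizer of `H` in `ℂ[K]` is commutative, then simple
`ℂ[K]`-modules are multiplicity free over `ℂ[H]`: their `ℂ[H]`-endomorphism rings are commutative,
and an isomorphism `S ≃ T` of simple submodules gives an endomorphism carrying `S` to `T`, which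
can commute with a projection onto `S` only if `T ≤ S`. -/
theorem isMultiplicityFree_of_commute (K : Type) [Group K] [Finite K] (H : Subgroup K)
    (hc : ∀ c d : MonoidAlgebra ℂ K, (∀ h ∈ H, Commute (MonoidAlgebra.of ℂ K h) c) →
      (∀ h ∈ H, Commute (MonoidAlgebra.of ℂ K h) d) → Commute c d)
    (V : Type) [AddCommGroup V] [Module (MonoidAlgebra ℂ K) V]
    (hV : IsSimpleModule (MonoidAlgebra ℂ K) V) :
    IsMultiplicityFree (groupSubalgebra K H) V := by
  have := groupSubalgebra_isSemisimpleRing K H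
  have hcomm : ∀ (f g : V →ₗ[groupSubalgebra K H] V) v, f (g v) = g (f v) := by
    intro f g v
    obtain ⟨c, hc1, hc2⟩ := exists_centralizer_smul K H V f
    obtain ⟨d, hd1, hd2⟩ := exists_centralizer_smul K H V g
    rw [hc2, hd2, hc2, hd2, ← mul_smul, ← mul_smul, (hc c d hc1 hd1).eq]
  have key : ∀ S T : Submodule (groupSubalgebra K H) V,
      Nonempty (S ≃ₗ[groupSubalgebra K H] T) → T ≤ S := by
    rintro S T ⟨e⟩ t ht
    obtain ⟨S', hS'⟩ := exists_isCompl S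
    let p := S.projectionOnto S' hS'
    let P : V →ₗ[groupSubalgebra K H] V := S.subtype ∘ₗ p
    let F : V →ₗ[groupSubalgebra K H] V := T.subtype ∘ₗ e.toLinearMap ∘ₗ p
    have h := hcomm P F (e.symm ⟨t, ht⟩ : S)
    have h1 : p (e.symm ⟨t, ht⟩ : S) = e.symm ⟨t, ht⟩ :=
      Submodule.projectionOnto_apply_left hS' _
    have h2 : F (e.symm ⟨t, ht⟩ : S) = t := by simp [F, h1]
    have h3 : P (e.symm ⟨t, ht⟩ : S) = (e.symm ⟨t, ht⟩ : S) := by simp [P, h1]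
    rw [h3, h2] at h
    rw [← h]
    exact (p t).2
  intro S T _ _ ⟨e⟩
  exact le_antisymm (key T S ⟨e.symm⟩) (key S T ⟨e⟩)

/-! ### The transposition anti-involution of `ℂ[G]` -/

/-- An anti-involution of `ℂ[G]` fixing the center pointwise, namely transposition in every
Wedderburn block. -/
theorem exists_antiInvolution (G : Type) [Group G] [Finite G] :
    ∃ θ : MonoidAlgebra ℂ G →ₗ[ℂ] MonoidAlgebra ℂ G, θ 1 = 1 ∧
      (∀ a b, θ (a * b) = θ b * θ a) ∧ (∀ a, θ (θ a) = a) ∧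
      ∀ a, (∀ b, Commute a b) → θ a = a := by
  have : NeZero (Nat.card G : ℂ) := ⟨Nat.cast_ne_zero.2 Nat.card_pos.ne'⟩
  obtain ⟨k, d, hd, ⟨e⟩⟩ := IsSemisimpleRing.exists_algEquiv_pi_matrix_of_isAlgClosed ℂ
    (MonoidAlgebra ℂ G)
  let T : (Π i, Matrix (Fin (d i)) (Fin (d i)) ℂ) →ₗ[ℂ] (Π i, Matrix (Fin (d i)) (Fin (d i)) ℂ) :=
    { toFun := fun M i => (M i).transpose
      map_add' := fun _ _ => rfl
      map_smul' := fun _ _ => rfl }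
  have hT : ∀ M i, T M i = (M i).transpose := fun _ _ => rfl
  refine ⟨e.symm.toLinearMap ∘ₗ T ∘ₗ e.toLinearMap, ?_, ?_, ?_, ?_⟩
  · suffices T 1 = 1 by simp [this]
    funext i; simp [hT]
  · intro a b
    suffices T (e a * e b) = T (e b) * T (e a) by simp [this]
    funext i; simp [hT]
  · intro a
    suffices T (T (e a)) = e a by simp [this]
    funext i; simp [hT]
  · intro a ha
    suffices T (e a) = e a by simp [this]
    funext i
    have hc : ∀ M : Matrix (Fin (d i)) (Fin (d i)) ℂ, Commute (e a i) M := by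
      intro M
      have := congrArg (fun x => e x i) (ha (e.symm (Pi.single i M))).eq
      simpa [commute_iff_eq] using this
    have hm : e a i ∈ Set.center (Matrix (Fin (d i)) (Fin (d i)) ℂ) := by
      rw [Semigroup.mem_center_iff]
      exact fun M => (hc M).eq.symm
    rw [Matrix.center_eq_range] at hm
    obtain ⟨z, hz⟩ := hm
    rw [hT, ← hz]
    simp

/-! ### Permutations -/

/-- Combinatorics of a permutation `π` with a marked point `l`: a choice `r` of one point on each
cycle, with `l` chosen on its own cycle, and a permutation `σ` fixing all chosen points and
conjugating `π` to its inverse. -/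
theorem exists_rep_and_reversal {X : Type} [Finite X] (π : Equiv.Perm X) (l : X) :
    ∃ (r : X → X) (σ : Equiv.Perm X), (∀ i, π.SameCycle i (r i)) ∧ (∀ i, r (π i) = r i) ∧
      r l = l ∧ (∀ i, r (r i) = r i) ∧ (∀ i, r i = i → σ i = i) ∧ (∀ i, r (σ i) = r i) ∧
      σ * π⁻¹ * σ⁻¹ = π := by
  classical
  let S := Equiv.Perm.SameCycle.setoid π
  let r : X → X := fun i => if π.SameCycle i l then l else (Quotient.mk S i).out
  have hr1 : ∀ i, π.SameCycle i (r i) := by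
    intro i
    by_cases h : π.SameCycle i l
    · simp [r, h]
    · simp only [r, h, if_false]
      exact (Quotient.mk_out (s := S) i).symm
  have hrc : ∀ i j, π.SameCycle i j → r i = r j := by
    intro i j hij
    have h1 : π.SameCycle i l ↔ π.SameCycle j l := ⟨hij.symm.trans, hij.trans⟩
    have h2 : Quotient.mk S i = Quotient.mk S j := Quotient.sound hij
    simp only [r, h1, h2]
  have hrl : r l = l := by simp [r, Equiv.Perm.SameCycle.refl]
  choose z hz using hr1
  -- `(π ^ t) (r i)` depends only on `i`, and not on the exponent `t` taking `i` to `r i`.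
  have hwd : ∀ (i : X) (t : ℤ), (π ^ t) i = r i → (π ^ t) (r i) = (π ^ z i) (r i) := by
    intro i t ht
    conv_lhs => rw [← hz i]
    conv_rhs => rw [← ht]
    rw [← Equiv.Perm.mul_apply, ← Equiv.Perm.mul_apply, ← zpow_add, ← zpow_add, add_comm]
  -- The reflection `σ = s` of each cycle at its chosen point: `π ^ (-t) (r i) ↦ π ^ t (r i)`.
  let s : X → X := fun i => (π ^ z i) (r i)
  have hrs : ∀ i, r (s i) = r i := fun i =>
    (hrc (r i) (s i) ⟨z i, rfl⟩).symm.trans (hrc i (r i) ⟨z i, hz i⟩).symm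
  have hss : Function.Involutive s := by
    intro i
    have h1 : (π ^ (- z i)) (s i) = r (s i) := by
      rw [hrs, zpow_neg]
      exact (π ^ z i).symm_apply_apply _
    have h2 := hwd (s i) _ h1
    change (π ^ z (s i)) (r (s i)) = i
    rw [← h2, hrs, ← hz i, zpow_neg]
    exact (π ^ z i).symm_apply_apply _
  have hsp : ∀ i, s i = π (s (π i)) := by
    intro i
    have hri : r (π i) = r i := (hrc i (π i) ⟨1, by simp⟩).symm
    have h1 : (π ^ (z (π i) + 1)) i = r i := by
      rw [zpow_add_one, Equiv.Perm.mul_apply, hz, hri]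
    change (π ^ z i) (r i) = π ((π ^ z (π i)) (r (π i)))
    rw [← hwd i _ h1, hri, add_comm, zpow_one_add, Equiv.Perm.mul_apply]
  refine ⟨r, hss.toPerm s, fun i => ⟨z i, hz i⟩, fun i => (hrc i (π i) ⟨1, by simp⟩).symm, hrl,
    fun i => (hrc i (r i) ⟨z i, hz i⟩).symm, ?_, hrs, ?_⟩
  · intro i hi
    change (π ^ z i) (r i) = i
    rw [hi]
    exact (hz i).trans hi
  · rw [mul_inv_eq_iff_eq_mul, mul_inv_eq_iff_eq_mul]
    ext i
    exact hsp i

/-- A coordinate tuple can be concentrated on one chosen point of each cycle by a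
`π`-twisted conjugation. -/
theorem exists_twisted_conj {X G : Type} [Finite X] [Group G] (π : Equiv.Perm X) (r : X → X)
    (hr : ∀ i, π.SameCycle i (r i)) (hrπ : ∀ i, r (π i) = r i) (g : X → G) :
    ∃ k : X → G, ∀ i, r i ≠ i → k i * g i * (k (π⁻¹ i))⁻¹ = 1 := by
  classical
  have := Fintype.ofFinite X
  have hex : ∀ i, ∃ t : ℕ, (π⁻¹ ^ t) i = r i := by
    intro i
    obtain ⟨t, -, -, ht⟩ := Equiv.Perm.SameCycle.exists_pow_eq π⁻¹
      (Equiv.Perm.sameCycle_inv.2 (hr i))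
    exact ⟨t, ht⟩
  -- `k` is built by recursion on the distance `d i` from the chosen point `r i` along the cycle:
  -- it is `1` there, and `k i = k (π⁻¹ i) * (g i)⁻¹` elsewhere.
  let d : X → ℕ := fun i => Nat.find (hex i)
  let F : ℕ → X → G := fun t => Nat.rec (fun _ => 1) (fun _ f i => f (π⁻¹ i) * (g i)⁻¹) t
  have hF : ∀ t i, F (t + 1) i = F t (π⁻¹ i) * (g i)⁻¹ := fun _ _ => rfl
  refine ⟨fun i => F (d i) i, fun i hi => ?_⟩
  have hri : r (π⁻¹ i) = r i := by
    rw [← hrπ (π⁻¹ i)]; simp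
  have hd : d i = d (π⁻¹ i) + 1 := by
    refine (Nat.find_comp_succ (hex i) ?_ ?_).trans ?_
    · obtain ⟨t, ht⟩ := hex (π⁻¹ i)
      exact ⟨t, by rw [pow_succ, Equiv.Perm.mul_apply, ht, hri]⟩
    · simpa using fun h => hi h.symm
    · congr 1
      simp only [d, pow_succ, Equiv.Perm.mul_apply, hri]
  change F (d i) i * g i * (F (d (π⁻¹ i)) (π⁻¹ i))⁻¹ = 1
  rw [hd, hF]
  group

/-! ### The tensor structure of `ℂ[G ≀ Sₙ]` -/

section wreath

variable {G : Type} [Group G] {n : ℕ}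

theorem wreathHom_apply (π : Equiv.Perm (Fin n)) (g : Fin n → G) (i : Fin n) :
    wreathHom G n π g i = g (π⁻¹ i) := rfl

theorem mulSingle_perm {M : Type} [One M] (π : Equiv.Perm (Fin n)) (i : Fin n) (x : M) :
    (fun j => (Pi.mulSingle i x : Fin n → M) (π⁻¹ j)) = Pi.mulSingle (π i) x := by
  ext1 j
  simp only [Pi.mulSingle_apply, Equiv.Perm.inv_eq_iff_eq]

theorem mem_Hmn {m : ℕ} {x : WreathProduct G n} :
    x ∈ Hmn G n m ↔ ∀ j : Fin n, m ≤ (j : ℕ) → x.right j = j := by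
  simp [Hmn, Subgroup.mem_iInf, MulAction.mem_stabilizer_iff]

instance [Finite G] : Finite (WreathProduct G n) :=
  Finite.of_equiv _ SemidirectProduct.equivProd.symm

/-- The embedding of `ℂ[G]` into `ℂ[G ≀ Sₙ]` at the `i`-th coordinate. -/
noncomputable def iota (i : Fin n) : MonoidAlgebra ℂ G →ₐ[ℂ] MonoidAlgebra ℂ (WreathProduct G n) :=
  MonoidAlgebra.mapDomainAlgHom ℂ ℂ
    ((SemidirectProduct.inl : (Fin n → G) →* WreathProduct G n).comp
      (MonoidHom.mulSingle (fun _ : Fin n => G) i))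

theorem iota_of (i : Fin n) (g : G) :
    iota (n := n) i (MonoidAlgebra.of ℂ G g) =
      MonoidAlgebra.of ℂ (WreathProduct G n) (SemidirectProduct.inl (Pi.mulSingle i g)) := by
  simp [iota]

theorem commute_iota {i j : Fin n} (hij : i ≠ j) (a b : MonoidAlgebra ℂ G) :
    Commute (iota i a) (iota j b) := by
  induction a using MonoidAlgebra.induction_on with
  | of x =>
    induction b using MonoidAlgebra.induction_on with
    | of y =>
      have h : Commute (Pi.mulSingle i x : Fin n → G) (Pi.mulSingle j y) :=
        Pi.mulSingle_commute (f := fun _ => G) hij x y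
      rw [iota_of, iota_of, commute_iff_eq, ← map_mul, ← map_mul, ← map_mul, ← map_mul, h.eq]
    | add b c hb hc => rw [map_add]; exact hb.add_right hc
    | smul z b hb => rw [map_smul]; exact hb.smul_right z
  | add b c hb hc => rw [map_add]; exact hb.add_left hc
  | smul z b hb => rw [map_smul]; exact hb.smul_left z

/-- `iota i` as a homomorphism of monoids. -/
noncomputable def iotaHom (i : Fin n) :
    MonoidAlgebra ℂ G →* MonoidAlgebra ℂ (WreathProduct G n) where
  toFun := iota i
  map_one' := map_one _
  map_mul' := map_mul _

theorem iotaHom_apply (i : Fin n) (a : MonoidAlgebra ℂ G) :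
    iotaHom (n := n) i a = iota i a := rfl

theorem pairwise_commute_iotaHom : Pairwise fun i j : Fin n =>
    ∀ a b : MonoidAlgebra ℂ G, Commute (iotaHom i a) (iotaHom j b) :=
  fun _ _ hij a b => commute_iota hij a b

/-- `tens a = a 0 ⊗ ⋯ ⊗ a (n - 1)` in `ℂ[Gⁿ] ⊆ ℂ[G ≀ Sₙ]`. -/
noncomputable def tens : (Fin n → MonoidAlgebra ℂ G) →* MonoidAlgebra ℂ (WreathProduct G n) :=
  MonoidHom.noncommPiCoprod iotaHom pairwise_commute_iotaHom

theorem tens_mulSingle (i : Fin n) (b : MonoidAlgebra ℂ G) :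
    tens (Pi.mulSingle i b) = iota i b :=
  MonoidHom.noncommPiCoprod_mulSingle _ _ _

theorem tens_of (g : Fin n → G) :
    tens (fun i => MonoidAlgebra.of ℂ G (g i)) =
      MonoidAlgebra.of ℂ (WreathProduct G n) (SemidirectProduct.inl g) := by
  let F : (Fin n → G) →* MonoidAlgebra ℂ (WreathProduct G n) :=
    tens.comp (MonoidHom.compLeft (MonoidAlgebra.of ℂ G) (Fin n))
  let F' : (Fin n → G) →* MonoidAlgebra ℂ (WreathProduct G n) :=
    (MonoidAlgebra.of ℂ (WreathProduct G n)).comp SemidirectProduct.inl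
  have hF : ∀ g, F g = tens (fun i => MonoidAlgebra.of ℂ G (g i)) := fun _ => rfl
  have hF' : ∀ g, F' g =
    MonoidAlgebra.of ℂ (WreathProduct G n) (SemidirectProduct.inl g) := fun _ => rfl
  have : F = F' := by
    refine MonoidHom.pi_ext fun i x => ?_
    have h : (fun j => MonoidAlgebra.of ℂ G ((Pi.mulSingle i x : Fin n → G) j)) =
        Pi.mulSingle i (MonoidAlgebra.of ℂ G x) :=
      (Pi.mulSingle_op (fun _ : Fin n => MonoidAlgebra.of ℂ G) (fun _ => map_one _) i x).symm
    rw [hF, hF', h, tens_mulSingle, iota_of]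
  rw [← hF, ← hF', this]

/-- The permutation `π` as an element of `ℂ[G ≀ Sₙ]`. -/
noncomputable def permEl : Equiv.Perm (Fin n) →* MonoidAlgebra ℂ (WreathProduct G n) :=
  (MonoidAlgebra.of ℂ (WreathProduct G n)).comp SemidirectProduct.inr

theorem of_eq_tens_mul_permEl (x : WreathProduct G n) :
    MonoidAlgebra.of ℂ (WreathProduct G n) x =
      tens (fun i => MonoidAlgebra.of ℂ G (x.left i)) * permEl x.right := by
  rw [tens_of, permEl, MonoidHom.comp_apply, ← map_mul, SemidirectProduct.inl_left_mul_inr_right]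

theorem permEl_mul_inv (π : Equiv.Perm (Fin n)) : permEl (G := G) π * permEl π⁻¹ = 1 := by
  rw [← map_mul, mul_inv_cancel, map_one]

theorem permEl_inv_mul (π : Equiv.Perm (Fin n)) : permEl (G := G) π⁻¹ * permEl π = 1 := by
  rw [← map_mul, inv_mul_cancel, map_one]

theorem permEl_mul_iota (π : Equiv.Perm (Fin n)) (i : Fin n) (b : MonoidAlgebra ℂ G) :
    permEl π * iota i b = iota (π i) b * permEl π := by
  induction b using MonoidAlgebra.induction_on with
  | of y =>
    rw [iota_of, iota_of, permEl, MonoidHom.comp_apply, ← map_mul, ← map_mul]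
    congr 1
    ext1
    · simpa [funext_iff, wreathHom_apply] using mulSingle_perm π i y
    · simp
  | add b c hb hc => rw [map_add, map_add, mul_add, add_mul, hb, hc]
  | smul z b hb => rw [map_smul, map_smul, mul_smul_comm, smul_mul_assoc, hb]

/-- `Sₙ` acts on `ℂ[G]^{⊗ n}` by permuting the tensor factors. -/
theorem permEl_mul_tens (π : Equiv.Perm (Fin n)) (a : Fin n → MonoidAlgebra ℂ G) :
    permEl π * tens a = tens (fun i => a (π⁻¹ i)) * permEl π := by
  let F : (Fin n → MonoidAlgebra ℂ G) →* MonoidAlgebra ℂ (WreathProduct G n) :=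
    { toFun := fun a => permEl π * tens a * permEl π⁻¹
      map_one' := by rw [map_one, mul_one, permEl_mul_inv]
      map_mul' := fun a b => by
        rw [map_mul]
        simp only [mul_assoc]
        rw [← mul_assoc (permEl π⁻¹) (permEl π), permEl_inv_mul, one_mul] }
  let F' : (Fin n → MonoidAlgebra ℂ G) →* MonoidAlgebra ℂ (WreathProduct G n) :=
    tens.comp
      { toFun := fun a i => a (π⁻¹ i)
        map_one' := rfl
        map_mul' := fun _ _ => rfl }
  have hF : ∀ a, F a = permEl π * tens a * permEl π⁻¹ := fun _ => rfl
  have hF' : ∀ a, F' a = tens (fun i => a (π⁻¹ i)) := fun _ => rfl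
  have h : F = F' := by
    refine MonoidHom.pi_ext fun i x => ?_
    have h : (fun j => (Pi.mulSingle i x : Fin n → MonoidAlgebra ℂ G) (π⁻¹ j)) =
        Pi.mulSingle (π i) x := mulSingle_perm π i x
    rw [hF, hF', h, tens_mulSingle, tens_mulSingle, permEl_mul_iota, mul_assoc, permEl_mul_inv, mul_one]
  have h' : permEl π * tens a * permEl π⁻¹ = tens (fun i => a (π⁻¹ i)) := by
    rw [← hF, ← hF', h]
  rw [← h', mul_assoc, permEl_inv_mul, mul_one]

theorem tens_update (a : Fin n → MonoidAlgebra ℂ G) (i : Fin n) (b : MonoidAlgebra ℂ G) :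
    tens (Function.update a i b) = tens (Function.update a i 1) * iota i b := by
  rw [← tens_mulSingle, ← map_mul]
  congr 1
  ext1 j
  by_cases h : j = i
  · subst h; simp
  · simp [h]

end wreath

/-! ### The anti-involution of `ℂ[G ≀ Sₙ]` -/

/-- An anti-involution of a `ℂ`-algebra that fixes the center pointwise. -/
structure CentralAntiInvolution (R : Type) [Ring R] [Algebra ℂ R] where
  /-- The underlying linear map. -/
  map : R →ₗ[ℂ] R
  map_one' : map 1 = 1
  map_mul' : ∀ a b, map (a * b) = map b * map a
  map_map' : ∀ a, map (map a) = a
  map_central' : ∀ a, (∀ b, Commute a b) → map a = a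

section theta

variable {G : Type} [Group G] {n : ℕ} (θ : CentralAntiInvolution (MonoidAlgebra ℂ G))

/-- The anti-homomorphism of `G ≀ Sₙ` into `ℂ[G ≀ Sₙ]` acting by `θ` on every copy of `ℂ[G]` and by
inversion on `Sₙ`. -/
noncomputable def thetaHom :
    WreathProduct G n →* (MonoidAlgebra ℂ (WreathProduct G n))ᵐᵒᵖ where
  toFun x := MulOpposite.op
    (permEl x.right⁻¹ * tens (fun i => θ.map (MonoidAlgebra.of ℂ G (x.left i))))
  map_one' := by
    have h : (fun i : Fin n => θ.map (MonoidAlgebra.of ℂ G ((1 : WreathProduct G n).left i))) = 1 := by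
      funext i
      rw [SemidirectProduct.one_left, Pi.one_apply, map_one, θ.map_one', Pi.one_apply]
    rw [h, SemidirectProduct.one_right, inv_one, map_one, map_one, mul_one, MulOpposite.op_one]
  map_mul' x y := by
    rw [← MulOpposite.op_mul]
    congr 1
    have h : (fun i => θ.map (MonoidAlgebra.of ℂ G ((x * y).left i))) =
        (fun i => θ.map (MonoidAlgebra.of ℂ G (y.left (x.right⁻¹ i)))) *
          fun i => θ.map (MonoidAlgebra.of ℂ G (x.left i)) := by
      funext i
      rw [SemidirectProduct.mul_left, Pi.mul_apply, wreathHom_apply, map_mul, θ.map_mul',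
        Pi.mul_apply]
    have h2 := permEl_mul_tens x.right⁻¹
      fun i => θ.map (MonoidAlgebra.of ℂ G (y.left (x.right⁻¹ i)))
    have hx : ∀ i, x.right⁻¹ (x.right i) = i := x.right.symm_apply_apply
    simp only [inv_inv, hx] at h2
    rw [h, SemidirectProduct.mul_right, mul_inv_rev, map_mul, map_mul, mul_assoc,
      ← mul_assoc (permEl x.right⁻¹), h2]
    simp only [mul_assoc]

/-- The linear extension of `thetaHom`: an anti-involution of `ℂ[G ≀ Sₙ]`. -/
noncomputable def theta :
    MonoidAlgebra ℂ (WreathProduct G n) →ₗ[ℂ] MonoidAlgebra ℂ (WreathProduct G n) :=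
  (MulOpposite.opLinearEquiv ℂ).symm.toLinearMap ∘ₗ
    (MonoidAlgebra.lift ℂ _ _ (thetaHom θ)).toLinearMap

theorem theta_of (x : WreathProduct G n) :
    theta θ (MonoidAlgebra.of ℂ (WreathProduct G n) x) =
      permEl x.right⁻¹ * tens (fun i => θ.map (MonoidAlgebra.of ℂ G (x.left i))) := by
  simp only [theta, LinearMap.comp_apply, AlgHom.toLinearMap_apply, MonoidAlgebra.lift_of]
  rfl

theorem theta_mul (a b : MonoidAlgebra ℂ (WreathProduct G n)) :
    theta θ (a * b) = theta θ b * theta θ a := by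
  simp only [theta, LinearMap.comp_apply, AlgHom.toLinearMap_apply, map_mul]
  rfl

theorem theta_one : theta θ (1 : MonoidAlgebra ℂ (WreathProduct G n)) = 1 := by
  simp only [theta, LinearMap.comp_apply, AlgHom.toLinearMap_apply, map_one]
  rfl

theorem theta_permEl (π : Equiv.Perm (Fin n)) : theta θ (permEl π) = permEl π⁻¹ := by
  have h : (fun i : Fin n => θ.map (MonoidAlgebra.of ℂ G
      ((SemidirectProduct.inr π : WreathProduct G n).left i))) = 1 := by
    funext i
    rw [SemidirectProduct.left_inr, Pi.one_apply, map_one, θ.map_one', Pi.one_apply]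
  rw [permEl, MonoidHom.comp_apply, theta_of, h, map_one, mul_one, SemidirectProduct.right_inr]
  rfl

theorem theta_iota (i : Fin n) (b : MonoidAlgebra ℂ G) :
    theta θ (iota i b) = iota i (θ.map b) := by
  induction b using MonoidAlgebra.induction_on with
  | of g =>
    have h : (fun j : Fin n => θ.map (MonoidAlgebra.of ℂ G
        ((SemidirectProduct.inl (Pi.mulSingle i g) : WreathProduct G n).left j))) =
        Pi.mulSingle i (θ.map (MonoidAlgebra.of ℂ G g)) := by
      rw [SemidirectProduct.left_inl]
      exact (Pi.mulSingle_op (fun (_ : Fin n) (g : G) => θ.map (MonoidAlgebra.of ℂ G g))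
        (fun _ => by rw [map_one, θ.map_one']) i g).symm
    rw [iota_of, theta_of, h, tens_mulSingle, SemidirectProduct.right_inl, inv_one, map_one, one_mul]
  | add b c hb hc => simp only [map_add, hb, hc]
  | smul z b hb => simp only [map_smul, hb]

theorem theta_tens (a : Fin n → MonoidAlgebra ℂ G) :
    theta θ (tens a) = tens (fun i => θ.map (a i)) := by
  let F : (Fin n → MonoidAlgebra ℂ G) →* (MonoidAlgebra ℂ (WreathProduct G n))ᵐᵒᵖ :=
    { toFun := fun a => MulOpposite.op (theta θ (tens a))
      map_one' := by rw [map_one, theta_one, MulOpposite.op_one]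
      map_mul' := fun a b => by rw [map_mul, theta_mul, MulOpposite.op_mul] }
  let F' : (Fin n → MonoidAlgebra ℂ G) →* (MonoidAlgebra ℂ (WreathProduct G n))ᵐᵒᵖ :=
    { toFun := fun a => MulOpposite.op (tens (fun i => θ.map (a i)))
      map_one' := by
        simp only [Pi.one_apply, θ.map_one']
        exact congrArg MulOpposite.op (map_one tens)
      map_mul' := fun a b => by
        rw [← MulOpposite.op_mul, ← map_mul]
        refine congrArg (fun x => MulOpposite.op (tens x)) ?_
        funext i
        rw [Pi.mul_apply, Pi.mul_apply, θ.map_mul'] }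
  have hF : ∀ a, F a = MulOpposite.op (theta θ (tens a)) := fun _ => rfl
  have hF' : ∀ a, F' a = MulOpposite.op (tens (fun i => θ.map (a i))) := fun _ => rfl
  have h : F = F' := by
    refine MonoidHom.pi_ext fun i x => ?_
    have h : (fun j => θ.map ((Pi.mulSingle i x : Fin n → MonoidAlgebra ℂ G) j)) =
        Pi.mulSingle i (θ.map x) :=
      (Pi.mulSingle_op (fun _ : Fin n => θ.map) (fun _ => θ.map_one') i x).symm
    rw [hF, hF', h, tens_mulSingle, tens_mulSingle, theta_iota]
  apply MulOpposite.op_injective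
  rw [← hF, ← hF', h]

theorem theta_theta (y : MonoidAlgebra ℂ (WreathProduct G n)) : theta θ (theta θ y) = y := by
  induction y using MonoidAlgebra.induction_on with
  | of x =>
    rw [of_eq_tens_mul_permEl, theta_mul, theta_permEl, theta_tens, theta_mul, theta_permEl,
      theta_tens, inv_inv]
    simp only [θ.map_map']
  | add b c hb hc => simp only [map_add, hb, hc]
  | smul z b hb => simp only [map_smul, hb]

/-! ### Elements of the group algebra of `H_{m,n}` -/

variable {m : ℕ}

theorem of_mem_groupSubalgebra {K : Type} [Group K] {H : Subgroup K} {h : K} (hh : h ∈ H) :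
    MonoidAlgebra.of ℂ K h ∈ groupSubalgebra K H :=
  Algebra.subset_adjoin ⟨⟨h, hh⟩, rfl⟩

theorem inl_mem_Hmn (g : Fin n → G) :
    (SemidirectProduct.inl g : WreathProduct G n) ∈ Hmn G n m :=
  mem_Hmn.2 fun j _ => by rw [SemidirectProduct.right_inl, Equiv.Perm.one_apply]

theorem inr_mem_Hmn {σ : Equiv.Perm (Fin n)} (hσ : ∀ j : Fin n, m ≤ (j : ℕ) → σ j = j) :
    (SemidirectProduct.inr σ : WreathProduct G n) ∈ Hmn G n m :=
  mem_Hmn.2 fun j hj => by rw [SemidirectProduct.right_inr, hσ j hj]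

theorem iota_mem (i : Fin n) (b : MonoidAlgebra ℂ G) :
    iota i b ∈ groupSubalgebra (WreathProduct G n) (Hmn G n m) := by
  induction b using MonoidAlgebra.induction_on with
  | of g => rw [iota_of]; exact of_mem_groupSubalgebra (inl_mem_Hmn _)
  | add b c hb hc => rw [map_add]; exact add_mem hb hc
  | smul z b hb => rw [map_smul]; exact Subalgebra.smul_mem _ hb z

theorem tens_mem (a : Fin n → MonoidAlgebra ℂ G) :
    tens a ∈ groupSubalgebra (WreathProduct G n) (Hmn G n m) := by
  rw [tens, MonoidHom.noncommPiCoprod_apply]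
  exact Submonoid.noncommProd_mem (groupSubalgebra (WreathProduct G n) (Hmn G n m)).toSubmonoid
    _ _ _ fun i _ => iota_mem i (a i)

theorem permEl_mem {σ : Equiv.Perm (Fin n)} (hσ : ∀ j : Fin n, m ≤ (j : ℕ) → σ j = j) :
    permEl σ ∈ groupSubalgebra (WreathProduct G n) (Hmn G n m) :=
  of_mem_groupSubalgebra (inr_mem_Hmn hσ)

theorem theta_mem {u : MonoidAlgebra ℂ (WreathProduct G n)}
    (hu : u ∈ groupSubalgebra (WreathProduct G n) (Hmn G n m)) :
    theta θ u ∈ groupSubalgebra (WreathProduct G n) (Hmn G n m) := by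
  induction hu using Algebra.adjoin_induction with
  | mem x hx =>
    obtain ⟨⟨h, hh⟩, rfl⟩ := hx
    rw [theta_of]
    exact mul_mem (permEl_mem fun j hj => Equiv.Perm.inv_eq_iff_eq.2 (mem_Hmn.1 hh j hj).symm)
      (tens_mem _)
  | algebraMap z =>
    rw [Algebra.algebraMap_eq_smul_one, map_smul, theta_one]
    exact Subalgebra.smul_mem _ (one_mem _) z
  | add a b _ _ ha hb => rw [map_add]; exact add_mem ha hb
  | mul a b _ _ ha hb => rw [theta_mul]; exact mul_mem hb ha

end theta

/-! ### Congruence of `x` and `Θ x` modulo commutators -/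

section diff

variable {G : Type} [Group G] [Finite G] {n : ℕ} (θ : CentralAntiInvolution (MonoidAlgebra ℂ G))
  (m : ℕ)

/-- The difference `y - Θ y`, averaged over conjugation by `H_{m,n}`. It vanishes exactly when `y`
and `Θ y` agree modulo the commutators `[ℂ[H_{m,n}], ℂ[G ≀ Sₙ]]`. -/
noncomputable def diff :
    MonoidAlgebra ℂ (WreathProduct G n) →ₗ[ℂ] MonoidAlgebra ℂ (WreathProduct G n) :=
  avg (Hmn G n m) - avg (Hmn G n m) ∘ₗ theta θ

theorem diff_apply (y : MonoidAlgebra ℂ (WreathProduct G n)) :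
    diff θ m y = avg (Hmn G n m) y - avg (Hmn G n m) (theta θ y) := rfl

/-- `diff` is invariant under conjugation by units of `ℂ[H_{m,n}]`, which `Θ` preserves. -/
theorem diff_conj {u v : MonoidAlgebra ℂ (WreathProduct G n)}
    (hu : u ∈ groupSubalgebra (WreathProduct G n) (Hmn G n m)) (hvu : v * u = 1)
    (y : MonoidAlgebra ℂ (WreathProduct G n)) :
    diff θ m (u * y * v) = diff θ m y := by
  rw [diff_apply, diff_apply, mul_assoc, avg_mul_comm _ hu, mul_assoc, hvu, mul_one, theta_mul,
    ← avg_mul_comm _ (theta_mem θ hu), ← theta_mul, mul_assoc, hvu, mul_one]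

/-- The vanishing of `diff` on `tens a * permEl π` when all coordinates of `a` are central and those
away from the chosen points (the fixed points of `r`) are `1`. Then `θ` fixes each coordinate, so
`Θ` only inverts `π`, and conjugation by `σ ∈ H_{m,n}` turns `π⁻¹` back into `π` while fixing `a`. -/
theorem diff_tens_central {π σ : Equiv.Perm (Fin n)} {r : Fin n → Fin n}
    (hσm : ∀ j : Fin n, m ≤ (j : ℕ) → σ j = j) (hrr : ∀ i, r (r i) = r i)
    (hσ : ∀ i, r i = i → σ i = i) (hrσ : ∀ i, r (σ i) = r i) (hσπ : σ * π⁻¹ * σ⁻¹ = π)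
    (a : Fin n → MonoidAlgebra ℂ G) (ha : ∀ i, r i ≠ i → a i = 1)
    (hc : ∀ i b, Commute (a i) b) : diff θ m (tens a * permEl π) = 0 := by
  have hθ : (fun i => θ.map (a i)) = a := funext fun i => θ.map_central' _ (hc i)
  have haσ : (fun i => a (σ⁻¹ i)) = a := by
    have h : ∀ i, a (σ i) = a i := by
      intro i
      by_cases hi : r i = i
      · rw [hσ i hi]
      · have hi' : r (σ i) ≠ σ i := by
          intro h
          apply hi
          rw [hrσ] at h
          have h2 := hσ (σ i) (by rw [← h, hrr])
          rw [σ.injective h2] at h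
          exact h
        rw [ha _ hi, ha _ hi']
    funext i
    rw [← h (σ⁻¹ i)]
    exact congrArg a (σ.apply_symm_apply i)
  rw [diff_apply, theta_mul, theta_permEl, theta_tens, hθ, ← avg_mul_comm _ (tens_mem a),
    sub_eq_zero]
  have h1 : permEl σ * ((tens a * permEl π⁻¹) * permEl σ⁻¹) = tens a * permEl π := by
    rw [mul_assoc, ← mul_assoc, permEl_mul_tens, haσ, mul_assoc, ← map_mul, ← map_mul,
      ← mul_assoc, hσπ]
  rw [← h1, avg_mul_comm _ (permEl_mem hσm), mul_assoc, permEl_inv_mul, mul_one]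

/-- The centrality hypothesis of `diff_tens_central` is removed one coordinate at a time; `s` is the
set of coordinates still allowed to be non-central. The coordinate at a chosen point `i` may be
conjugated by any `h ∈ G`, since conjugating by the tuple with entry `h` on the whole cycle of `i`
changes nothing else. Hence it may be replaced by its average, which is central. -/
theorem diff_tens {π σ : Equiv.Perm (Fin n)} {r : Fin n → Fin n}
    (hσm : ∀ j : Fin n, m ≤ (j : ℕ) → σ j = j) (hrπ : ∀ i, r (π i) = r i)
    (hrr : ∀ i, r (r i) = r i)
    (hσ : ∀ i, r i = i → σ i = i) (hrσ : ∀ i, r (σ i) = r i) (hσπ : σ * π⁻¹ * σ⁻¹ = π)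
    (s : Finset (Fin n)) :
    ∀ (a : Fin n → MonoidAlgebra ℂ G), (∀ i, r i ≠ i → a i = 1) →
      (∀ i, i ∉ s → ∀ b, Commute (a i) b) → diff θ m (tens a * permEl π) = 0 := by
  classical
  induction s using Finset.induction_on with
  | empty =>
    intro a ha hc
    exact diff_tens_central θ m hσm hrr hσ hrσ hσπ a ha fun i => hc i (Finset.notMem_empty i)
  | insert i s his ih =>
    intro a ha hc
    by_cases hi : r i = i
    swap
    · refine ih a ha fun j hj b => ?_
      by_cases hji : j = i
      · rw [hji, ha i hi]; exact Commute.one_left b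
      · exact hc j (by simp [hji, hj]) b
    let l : MonoidAlgebra ℂ G →ₗ[ℂ] MonoidAlgebra ℂ (WreathProduct G n) :=
      diff θ m ∘ₗ LinearMap.mulRight ℂ (permEl π) ∘ₗ
        LinearMap.mulLeft ℂ (tens (Function.update a i 1)) ∘ₗ (iota i).toLinearMap
    have hl : ∀ b, l b = diff θ m (tens (Function.update a i b) * permEl π) := by
      intro b
      rw [tens_update]
      rfl
    have hinv : ∀ h : G, l (MonoidAlgebra.of ℂ G h * a i * MonoidAlgebra.of ℂ G h⁻¹) =
        l (a i) := by
      intro h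
      -- The tuple with entry `h` on the cycle of `i`; it commutes with `π`.
      let κ : G → Fin n → MonoidAlgebra ℂ G := fun h j =>
        if r j = i then MonoidAlgebra.of ℂ G h else 1
      have hκ : κ h⁻¹ * κ h = 1 := by
        funext j
        by_cases hj : r j = i
        · simp only [κ, Pi.mul_apply, hj, if_true, ← map_mul, inv_mul_cancel, map_one, Pi.one_apply]
        · simp only [κ, Pi.mul_apply, hj, if_false, mul_one, Pi.one_apply]
      have hκ' : κ h * κ h⁻¹ = 1 := by
        funext j
        by_cases hj : r j = i
        · simp only [κ, Pi.mul_apply, hj, if_true, ← map_mul, mul_inv_cancel, map_one, Pi.one_apply]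
        · simp only [κ, Pi.mul_apply, hj, if_false, mul_one, Pi.one_apply]
      have hκπ : permEl π * tens (κ h⁻¹) = tens (κ h⁻¹) * permEl π := by
        rw [permEl_mul_tens]
        congr 2
        funext j
        have hrj : r (π⁻¹ j) = r j := by
          rw [← hrπ (π⁻¹ j)]
          exact congrArg r (π.apply_symm_apply j)
        simp only [κ, hrj]
      have hu : Function.update a i (MonoidAlgebra.of ℂ G h * a i * MonoidAlgebra.of ℂ G h⁻¹) =
          κ h * a * κ h⁻¹ := by
        funext j
        by_cases hji : j = i
        · subst hji
          simp only [κ, Function.update_self, Pi.mul_apply, hi, if_true]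
        · rw [Function.update_of_ne hji]
          by_cases hj : r j = j
          · have : r j ≠ i := fun h => hji (hj.symm.trans h)
            simp only [κ, Pi.mul_apply, this, if_false, mul_one, one_mul]
          · rw [Pi.mul_apply, Pi.mul_apply, ha j hj, mul_one, ← Pi.mul_apply, hκ', Pi.one_apply]
      rw [hl, hl, hu, Function.update_eq_self, tens.map_mul, tens.map_mul, mul_assoc, ← hκπ, ← mul_assoc,
        mul_assoc (tens (κ h)), diff_conj]
      · exact tens_mem _
      · rw [← map_mul, hκ, map_one]
    have h1 := map_avg (⊤ : Subgroup G) l (a i) fun h _ => hinv h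
    rw [hl, hl, Function.update_eq_self] at h1
    rw [← h1]
    refine ih _ (fun j hj => ?_) fun j hj b => ?_
    · have hji : j ≠ i := fun h => hj (h ▸ hi)
      rw [Function.update_of_ne hji, ha j hj]
    · by_cases hji : j = i
      · rw [hji, Function.update_self]
        induction b using MonoidAlgebra.induction_on with
        | of g => exact (commute_avg (⊤ : Subgroup G) (Subgroup.mem_top g) (a i)).symm
        | add b c hb hc => exact hb.add_right hc
        | smul z b hb => exact hb.smul_right z
      · rw [Function.update_of_ne hji]
        exact hc j (by simp [hji, hj]) b

/-- `x ≡ Θ x` modulo commutators for every group element `x` of `H_{m+1,n}`. -/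
theorem diff_of (hm : m < n) {x : WreathProduct G n} (hx : x ∈ Hmn G n (m + 1)) :
    diff θ m (MonoidAlgebra.of ℂ (WreathProduct G n) x) = 0 := by
  -- The marked point `m` is chosen on its own cycle, so that `σ` fixes it and lies in `S_m`.
  obtain ⟨r, σ, hr, hrπ, hrl, hrr, hσ, hrσ, hσπ⟩ := exists_rep_and_reversal x.right ⟨m, hm⟩
  obtain ⟨k, hk⟩ := exists_twisted_conj x.right r hr hrπ x.left
  have hσm : ∀ j : Fin n, m ≤ (j : ℕ) → σ j = j := by
    intro j hj
    apply hσ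
    rcases hj.eq_or_lt with h | h
    · have : j = ⟨m, hm⟩ := Fin.ext h.symm
      rw [this, hrl]
    · obtain ⟨z, hz⟩ := hr j
      rw [← hz]
      exact Equiv.Perm.zpow_apply_eq_self_of_apply_eq_self (mem_Hmn.1 hx j h) z
  rw [← diff_conj θ m (of_mem_groupSubalgebra (inl_mem_Hmn k))
    (v := MonoidAlgebra.of ℂ _ (SemidirectProduct.inl k)⁻¹)
    (by rw [← map_mul, inv_mul_cancel, map_one]), ← map_mul, ← map_mul, of_eq_tens_mul_permEl]
  have hright : (SemidirectProduct.inl k * x * (SemidirectProduct.inl k)⁻¹).right = x.right := by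
    simp
  rw [hright]
  refine diff_tens θ m hσm hrπ hrr hσ hrσ hσπ Finset.univ _ (fun i hi => ?_)
    fun i hi => absurd (Finset.mem_univ i) hi
  rw [← map_one (MonoidAlgebra.of ℂ G), ← hk i hi]
  rfl

/-! ### Commutativity of the centralizer -/

/-- `Θ` fixes every element of `ℂ[H_{m+1,n}]` that centralizes `H_{m,n}`; `ℂ[H_{m+1,n}]` is given
as the image of a group algebra `ℂ[K]`. -/
theorem theta_eq_self (hm : m < n) {K : Type} [Group K] (f : K →* WreathProduct G n)
    (hf : ∀ k, f k ∈ Hmn G n (m + 1)) (c : MonoidAlgebra ℂ K)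
    (hc : ∀ h ∈ Hmn G n m, Commute (MonoidAlgebra.of ℂ _ h) (MonoidAlgebra.mapDomainAlgHom ℂ ℂ f c)) :
    theta θ (MonoidAlgebra.mapDomainAlgHom ℂ ℂ f c) = MonoidAlgebra.mapDomainAlgHom ℂ ℂ f c := by
  have h0 : diff θ m (MonoidAlgebra.mapDomainAlgHom ℂ ℂ f c) = 0 := by
    clear hc
    induction c using MonoidAlgebra.induction_on with
    | of k =>
      have h := diff_of θ m hm (hf k)
      simpa using h
    | add b c hb hc => rw [map_add, map_add, hb, hc, add_zero]
    | smul z b hb => rw [map_smul, map_smul, hb, smul_zero]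
  have hc' : ∀ u ∈ groupSubalgebra (WreathProduct G n) (Hmn G n m),
      Commute u (MonoidAlgebra.mapDomainAlgHom ℂ ℂ f c) := by
    intro u hu
    induction hu using Algebra.adjoin_induction with
    | mem x hx =>
      obtain ⟨⟨h, hh⟩, rfl⟩ := hx
      exact hc h hh
    | algebraMap z => exact Algebra.commutes z _
    | add a b _ _ ha hb => exact ha.add_left hb
    | mul a b _ _ ha hb => exact ha.mul_left hb
  have hc'' : ∀ h ∈ Hmn G n m, Commute (MonoidAlgebra.of ℂ _ h)
      (theta θ (MonoidAlgebra.mapDomainAlgHom ℂ ℂ f c)) := by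
    intro h hh
    have h1 := congrArg (theta θ) (hc' _ (theta_mem θ (of_mem_groupSubalgebra hh))).eq
    rw [theta_mul, theta_mul, theta_theta] at h1
    exact h1.symm
  rw [diff_apply, avg_eq_self _ _ hc, avg_eq_self _ _ hc'', sub_eq_zero] at h0
  exact h0.symm

end diff

/-- The centralizer of `H_{m,n}` in `ℂ[H_{m+1,n}]` is commutative, since `Θ` is an
anti-automorphism restricting to the identity on it. Here `H_{m+1,n}` is presented as the
image of an injective homomorphism `f` and `H` is the preimage of `H_{m,n}`. -/
theorem commute_of_centralizes (G : Type) [Group G] [Finite G] {n m : ℕ} (hm : m < n)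
    {K : Type} [Group K] (f : K →* WreathProduct G n) (hinj : Function.Injective f)
    (hf : ∀ x, x ∈ Hmn G n (m + 1) ↔ ∃ k, f k = x) (H : Subgroup K)
    (hH : ∀ k, k ∈ H ↔ f k ∈ Hmn G n m) (c d : MonoidAlgebra ℂ K)
    (hc : ∀ h ∈ H, Commute (MonoidAlgebra.of ℂ K h) c)
    (hd : ∀ h ∈ H, Commute (MonoidAlgebra.of ℂ K h) d) : Commute c d := by
  obtain ⟨t, h1, h2, h3, h4⟩ := exists_antiInvolution G
  let θ : CentralAntiInvolution (MonoidAlgebra ℂ G) := ⟨t, h1, h2, h3, h4⟩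
  have hfk : ∀ k, f k ∈ Hmn G n (m + 1) := fun k => (hf _).2 ⟨k, rfl⟩
  have key : ∀ e : MonoidAlgebra ℂ K, (∀ h ∈ H, Commute (MonoidAlgebra.of ℂ K h) e) →
      theta θ (MonoidAlgebra.mapDomainAlgHom ℂ ℂ f e) = MonoidAlgebra.mapDomainAlgHom ℂ ℂ f e := by
    intro e he
    refine theta_eq_self θ m hm f hfk e fun h hh => ?_
    obtain ⟨k, rfl⟩ := (hf h).1 (mem_Hmn.2 fun j hj => mem_Hmn.1 hh j (by omega))
    have h5 := (he k ((hH k).2 hh)).map (MonoidAlgebra.mapDomainAlgHom ℂ ℂ f)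
    simpa using h5
  have hcd := key (c * d) fun h hh => (hc h hh).mul_right (hd h hh)
  rw [map_mul, theta_mul, key c hc, key d hd, ← map_mul, ← map_mul] at hcd
  exact (MonoidAlgebra.mapDomain_injective hinj hcd).symm

set_option synthInstance.maxHeartbeats 1000000 in
/-- For `2 ≤ m ≤ n`, the restriction to `H_{m-1,n}` of every
finite-dimensional complex irreducible representation of `H_{m,n}` is multiplicity free; in
particular the restriction to `H_{n-1,n}` of every finite-dimensional complex irreducible
representation of `G ≀ Sₙ` is multiplicity free. -/
theorem branching_multiplicity_free (G : Type) [Group G] [Fintype G]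
    (n m : ℕ) (h2 : 2 ≤ m) (hmn : m ≤ n) :
    (∀ (V : Type) [AddCommGroup V] [Module (MonoidAlgebra ℂ (Hmn G n m)) V],
      IsSimpleModule (MonoidAlgebra ℂ (Hmn G n m)) V →
      IsMultiplicityFree
        (groupSubalgebra (Hmn G n m) ((Hmn G n (m - 1)).subgroupOf (Hmn G n m))) V) ∧
    (2 ≤ n →
      ∀ (V : Type) [AddCommGroup V] [Module (MonoidAlgebra ℂ (WreathProduct G n)) V],
        IsSimpleModule (MonoidAlgebra ℂ (WreathProduct G n)) V →
        IsMultiplicityFree (groupSubalgebra (WreathProduct G n) (Hmn G n (n - 1))) V) := by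
  constructor
  · intro V _ _ hV
    obtain ⟨m, rfl⟩ : ∃ k, m = k + 1 := ⟨m - 1, by omega⟩
    rw [Nat.add_sub_cancel]
    refine isMultiplicityFree_of_commute _ _ (fun c d hc hd => ?_) V hV
    exact commute_of_centralizes G (m := m) (by omega) (Hmn G n (m + 1)).subtype
      Subtype.val_injective (fun x => ⟨fun hx => ⟨⟨x, hx⟩, rfl⟩, fun ⟨k, hk⟩ => hk ▸ k.2⟩) _
      (fun k => Subgroup.mem_subgroupOf) c d hc hd
  · intro hn V _ _ hV
    obtain ⟨k, rfl⟩ : ∃ k, n = k + 1 := ⟨n - 1, by omega⟩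
    rw [Nat.add_sub_cancel]
    refine isMultiplicityFree_of_commute _ _ (fun c d hc hd => ?_) V hV
    refine commute_of_centralizes G (m := k) (by omega) (MonoidHom.id _)
      Function.injective_id (fun x => ⟨fun _ => ⟨x, rfl⟩, fun _ => mem_Hmn.2 fun j hj => ?_⟩) _
      (fun k => Iff.rfl) c d hc hd
    exact absurd j.2 (by omega)
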